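/- Let (X, μ) be a finite measure space and, for each n ∈ ℕ, let f(·;n) : X → [0,∞) be an integrable function such that for every x ∈ X the numerical sequence n ↦ f(x;n) is nondecreasing; set F(n) = ∫_X f(x;n) dμ(x). Let p > 0 and suppose F(n) = O(n^p) as n → ∞. Then for every ε > 0 and μ-almost every x ∈ X one has f(x;n) = O(n^{p+ε}) as n → ∞. -/

import Mathlib

open MeasureTheory Filter Asymptotics

/-!
Along the powers `b ^ k` of a base `b > 1`, the numbers `F (b ^ k) / (b ^ k) ^ (p + ε)` are
dominated by a geometric series of ratio `b ^ (-ε)`, so by Tonelli the series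
`∑ f (b ^ k) x / (b ^ k) ^ (p + ε)` converges for almost every `x`, and its terms tend to zero.
Monotonicity in `n` fills the gaps, because consecutive powers differ by a bounded factor.
-/

section PowerGrowth

variable {b : ℕ} {u : ℕ → ℝ} {p q : ℝ}

theorem natCast_pow_log_add_one_isTheta (hb : 1 < b) :
    (fun n : ℕ => ((b ^ (Nat.log b n + 1) : ℕ) : ℝ)) =Θ[atTop] fun n : ℕ => (n : ℝ) := by
  constructor
  · refine IsBigO.of_bound b ?_
    filter_upwards [eventually_ne_atTop 0] with n hn
    have upper : b ^ (Nat.log b n + 1) ≤ b * n := by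
      rw [pow_succ']
      exact Nat.mul_le_mul_left b (Nat.pow_log_le_self b hn)
    simp only [Real.norm_natCast]
    exact_mod_cast upper
  · refine isBigO_of_le _ fun n => ?_
    simp only [Real.norm_natCast]
    exact_mod_cast (Nat.lt_pow_succ_log_self hb n).le

theorem tendsto_natLog_atTop (hb : 1 < b) : Tendsto (Nat.log b) atTop atTop :=
  tendsto_atTop_atTop_of_monotone Nat.log_monotone fun k => ⟨b ^ k, (Nat.log_pow hb k).ge⟩

theorem isBigO_rpow_of_monotone_of_isBigO_comp_pow (hb : 1 < b) (hu_mono : Monotone u)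
    (hu_nonneg : ∀ n, 0 ≤ u n)
    (hu : (fun k => u (b ^ k)) =O[atTop] fun k => ((b ^ k : ℕ) : ℝ) ^ q) :
    u =O[atTop] fun n : ℕ => (n : ℝ) ^ q := by
  have next_power : Tendsto (fun n => Nat.log b n + 1) atTop atTop :=
    (tendsto_add_atTop_nat 1).comp (tendsto_natLog_atTop hb)
  calc u
    _ =O[atTop] fun n => u (b ^ (Nat.log b n + 1)) := isBigO_of_le _ fun n => by
        simpa only [Real.norm_of_nonneg (hu_nonneg _)] using
          hu_mono (Nat.lt_pow_succ_log_self hb n).le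
    _ =O[atTop] fun n => ((b ^ (Nat.log b n + 1) : ℕ) : ℝ) ^ q := hu.comp_tendsto next_power
    _ =O[atTop] fun n : ℕ => (n : ℝ) ^ q :=
        ((natCast_pow_log_add_one_isTheta hb).rpow (.of_forall fun _ => Nat.cast_nonneg _)
          (.of_forall fun _ => Nat.cast_nonneg _)).isBigO

theorem summable_comp_pow_div_rpow (hb : 1 < b) (hpq : p < q)
    (hu : u =O[atTop] fun n : ℕ => (n : ℝ) ^ p) :
    Summable fun k => u (b ^ k) / ((b ^ k : ℕ) : ℝ) ^ q := by
  have hb_real : (1 : ℝ) < b := mod_cast hb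
  have geometric : Summable fun k : ℕ => ((b : ℝ) ^ (p - q)) ^ k :=
    summable_geometric_of_lt_one (by positivity)
      (Real.rpow_lt_one_of_one_lt_of_neg hb_real (sub_neg.2 hpq))
  have ratio (k : ℕ) :
      ((b ^ k : ℕ) : ℝ) ^ p / ((b ^ k : ℕ) : ℝ) ^ q = ((b : ℝ) ^ (p - q)) ^ k := by
    rw [← Real.rpow_sub (by positivity), Nat.cast_pow, Real.rpow_pow_comm (by positivity)]
  refine summable_of_isBigO_nat geometric (IsBigO.congr_right ?_ ratio)
  simp only [div_eq_mul_inv]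
  exact (hu.comp_tendsto (tendsto_pow_atTop_atTop_of_one_lt hb)).mul (isBigO_refl _ _)

theorem const_isBigO_natCast_rpow (c : ℝ) (hp : 0 ≤ p) :
    (fun _ : ℕ => c) =O[atTop] fun n : ℕ => (n : ℝ) ^ p := by
  refine IsBigO.of_bound |c| ?_
  filter_upwards [eventually_ge_atTop 1] with n hn
  have one_le : 1 ≤ (n : ℝ) ^ p := Real.one_le_rpow (mod_cast hn) hp
  rw [Real.norm_eq_abs, Real.norm_of_nonneg (zero_le_one.trans one_le)]
  exact le_mul_of_one_le_right (abs_nonneg c) one_le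

end PowerGrowth

section AlmostEverywhere

variable {X E ι : Type*} [MeasurableSpace X] {μ : Measure X} [NormedAddCommGroup E]

theorem ae_summable_norm_of_summable_integral_norm [Countable ι] {g : ι → X → E}
    (hg : ∀ i, Integrable (g i) μ) (hsum : Summable fun i => ∫ x, ‖g i x‖ ∂μ) :
    ∀ᵐ x ∂μ, Summable fun i => ‖g i x‖ := by
  refine summable_norm_of_tsum_eLpNorm_ne_top le_rfl (fun i => (hg i).aestronglyMeasurable) ?_
  simp_rw [eLpNorm_one_eq_lintegral_enorm, ← ofReal_integral_norm_eq_lintegral_enorm (hg _)]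
  exact hsum.tsum_ofReal_ne_top

theorem ae_isLittleO_of_summable_integral_norm_div [Countable ι] {g : ι → X → E} {w : ι → ℝ}
    (hg : ∀ i, Integrable (g i) μ) (hw : ∀ i, 0 < w i)
    (hsum : Summable fun i => (∫ x, ‖g i x‖ ∂μ) / w i) :
    ∀ᵐ x ∂μ, (fun i => g i x) =o[cofinite] w := by
  have norm_quotient (i : ι) (x : X) : ‖‖g i x‖ / w i‖ = ‖g i x‖ / w i :=
    Real.norm_of_nonneg (div_nonneg (norm_nonneg _) (hw i).le)
  have ae_summable : ∀ᵐ x ∂μ, Summable fun i => ‖‖g i x‖ / w i‖ := by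
    refine ae_summable_norm_of_summable_integral_norm (fun i => (hg i).norm.div_const (w i)) ?_
    simpa only [norm_quotient, integral_div] using hsum
  filter_upwards [ae_summable] with x hx
  simp only [norm_quotient] at hx
  exact ((isLittleO_iff_tendsto fun i hi => absurd hi (hw i).ne').2
    hx.tendsto_cofinite_zero).of_norm_left

variable {f : ℕ → X → ℝ} {p q ε : ℝ}

theorem ae_isBigO_rpow_of_nonneg_of_integral_isBigO_rpow (hf_nonneg : ∀ n, 0 ≤ᵐ[μ] f n)
    (hf_int : ∀ n, Integrable (f n) μ) (hf_mono : ∀ᵐ x ∂μ, Monotone fun n => f n x)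
    (hpq : p < q) (hf : (fun n => ∫ x, f n x ∂μ) =O[atTop] fun n : ℕ => (n : ℝ) ^ p) :
    ∀ᵐ x ∂μ, (fun n => f n x) =O[atTop] fun n : ℕ => (n : ℝ) ^ q := by
  have integral_norm (n : ℕ) : ∫ x, ‖f n x‖ ∂μ = ∫ x, f n x ∂μ :=
    integral_congr_ae ((hf_nonneg n).mono fun _ hx => Real.norm_of_nonneg hx)
  have summable_powers :
      Summable fun k => (∫ x, ‖f (2 ^ k) x‖ ∂μ) / ((2 ^ k : ℕ) : ℝ) ^ q := by
    simpa only [integral_norm] using summable_comp_pow_div_rpow one_lt_two hpq hf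
  have along_powers := ae_isLittleO_of_summable_integral_norm_div
    (fun k => hf_int (2 ^ k)) (fun k => by positivity) summable_powers
  filter_upwards [along_powers, hf_mono, ae_all_iff.2 hf_nonneg] with x hx hx_mono hx_nonneg
  rw [Nat.cofinite_eq_atTop] at hx
  exact isBigO_rpow_of_monotone_of_isBigO_comp_pow one_lt_two hx_mono hx_nonneg hx.isBigO

theorem power_bound_disc_general (hf_int : ∀ n, Integrable (f n) μ)
    (hf_mono : ∀ᵐ x ∂μ, Monotone fun n => f n x) (hp : 0 ≤ p) (hε : 0 < ε)
    (hf : (fun n => ∫ x, f n x ∂μ) =O[atTop] fun n : ℕ => (n : ℝ) ^ p) :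
    ∀ᵐ x ∂μ, (fun n => f n x) =O[atTop] fun n : ℕ => (n : ℝ) ^ (p + ε) := by
  -- The increments from time `0` are nonnegative, and for `p ≥ 0` a constant is `O(n ^ p)`.
  have increments : ∀ᵐ x ∂μ, (fun n => f n x - f 0 x) =O[atTop] fun n : ℕ => (n : ℝ) ^ (p + ε) := by
    refine ae_isBigO_rpow_of_nonneg_of_integral_isBigO_rpow
      (fun n => hf_mono.mono fun x hx => sub_nonneg.2 (hx n.zero_le))
      (fun n => (hf_int n).sub (hf_int 0))
      (hf_mono.mono fun x hx m n hmn => sub_le_sub_right (hx hmn) _) (lt_add_of_pos_right p hε) ?_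
    simpa only [integral_sub (hf_int _) (hf_int 0)] using
      hf.sub (const_isBigO_natCast_rpow (∫ x, f 0 x ∂μ) hp)
  filter_upwards [increments] with x hx
  simpa only [sub_add_cancel] using
    hx.add (const_isBigO_natCast_rpow (f 0 x) (add_nonneg hp hε.le))

end AlmostEverywhere

/-- Discrete-time version: if the averages satisfy `F(n) = O(n^p)` with `p > 0` and the
sequences `n ↦ f(x;n)` are nondecreasing, then for every `ε > 0` and almost every `x` one has
`f(x;n) = O(n^(p+ε))` as `n → ∞`. -/
theorem power_bound_disc {X : Type*} [MeasurableSpace X] (μ : Measure X) [IsFiniteMeasure μ]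
    (f : ℕ → X → ℝ) (F : ℕ → ℝ)
    (hf_nonneg : ∀ n : ℕ, ∀ x : X, 0 ≤ f n x)
    (hf_int : ∀ n : ℕ, Integrable (f n) μ)
    (hF : ∀ n : ℕ, F n = ∫ x, f n x ∂μ)
    (hf_mono : ∀ x : X, Monotone fun n : ℕ => f n x)
    (p : ℝ) (hp : 0 < p) (hF_O : F =O[atTop] fun n : ℕ => (n : ℝ) ^ p) :
    ∀ ε : ℝ, 0 < ε →
      ∀ᵐ x ∂μ, (fun n : ℕ => f n x) =O[atTop] fun n : ℕ => (n : ℝ) ^ (p + ε) := by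
  intro ε hε
  exact power_bound_disc_general hf_int (.of_forall hf_mono) hp.le hε (funext hF ▸ hF_O)
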